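/- arXiv:2204.01378 — 2 statements merged into one kernel-verified Lean document; each statement's English description precedes it below -/
import Mathlib

section
/- Let M be a metric measure space with liminf_{r→0} μ(B(x,r))/r^d > 0 at relevant points, and suppose the resolvent density satisfies g_λ(y,z) ≥ c_x ϱ(y,z)^{2−d} for y,z near each x ∈ Σ. Let 1 < p < ∞ with d > 2p, and Σ ⊆ M closed with H^{d−2p}(Σ) < ∞ (H denotes Hausdorff measure). Then cap_{2,p}(Σ) = 0. -/
open Set MeasureTheory ENNReal Metric Filter

/-- The resolvent `(2,p)`-capacity built from a symmetric resolvent density `g`: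
`cap_{2,p}(E)` is the infimum of `∫ f^p dμ` over nonnegative measurable `f` with
`∫ g(x,y) f(y) dμ(y) ≥ 1` for all `x ∈ E`. -/
noncomputable def rcapK {M : Type*} [MeasurableSpace M] (μ : Measure M) (p : ℝ)
    (g : M → M → ℝ≥0∞) (E : Set M) : ℝ≥0∞ :=
  ⨅ f ∈ {f : M → ℝ≥0∞ | Measurable f ∧ ∀ x ∈ E, 1 ≤ ∫⁻ y, g x y * f y ∂μ},
    ∫⁻ x, f x ^ p ∂μ

/-! A set has capacity zero as soon as it carries admissible functions `h` that are bounded in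
`L^p` and arbitrarily small in `L^1`. Indeed, let `f` be nearly optimal and consider the admissible
function `(1 - t) f + t h`. The set `{1 ≤ h}` has small measure by Markov's inequality, so `f`
contributes almost nothing there, while off that set `h ^ p ≤ h` and convexity of the `p`-th power
apply. Hence `cap ≤ (1 - t) cap + C t ^ p`, that is `cap ≤ C t ^ (p - 1)`, and `t` is arbitrary.

Such `h` come from Hausdorff coverings by balls `B` of radius `r < δ`. The kernel is at least
`c r ^ (α - d)` on `B`, so a function of order `r ^ (-α)` on `B` is admissible for `B`, and the
integral of its `q`-th power is at most `C r ^ (d - α q)` for every `q ≥ 1`. Take the supremum over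
the cover: for `q = p` the sum of these bounds is controlled by the Hausdorff measure, and for
`q = 1` there is an additional factor `δ ^ (α (p - 1))`. -/

lemma ennreal_rpow_le_rpow_of_nonpos {x y : ℝ≥0∞} {q : ℝ} (hxy : x ≤ y) (hq : q ≤ 0) :
    y ^ q ≤ x ^ q := by
  rw [← neg_neg q, ENNReal.rpow_neg x, ENNReal.rpow_neg y, ENNReal.inv_le_inv]
  exact ENNReal.rpow_le_rpow hxy (neg_nonneg.2 hq)

lemma exists_rpow_mul_lt {q : ℝ} (hq : 0 < q) {b B ε : ℝ≥0∞} (hb : 0 < b) (hB : B ≠ ∞)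
    (hε : 0 < ε) : ∃ t, 0 < t ∧ t < b ∧ t ^ q * B < ε := by
  obtain ⟨c, hc, hcB⟩ := ENNReal.exists_pos_mul_lt hB hε.ne'
  obtain ⟨t, ht, htlt⟩ :=
    exists_between (lt_min hb (ENNReal.rpow_pos_of_nonneg hc (inv_nonneg.2 hq.le)))
  obtain ⟨htb, htc⟩ := lt_min_iff.1 htlt
  exact ⟨t, ht, htb, (mul_le_mul_left ((ENNReal.lt_rpow_inv_iff hq).1 htc).le B).trans_lt hcB⟩

lemma exists_gt_lt_rpow_le_add {s : ℝ} (hs : 0 < s) {D δ ε : ℝ≥0∞} (hD : D < δ) (hε : 0 < ε) :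
    ∃ r, D < r ∧ r < δ ∧ r ^ s ≤ D ^ s + ε := by
  have hDs : D ^ s < D ^ s + ε :=
    ENNReal.lt_add_right (ENNReal.rpow_ne_top_of_nonneg hs.le hD.ne_top) hε.ne'
  obtain ⟨r, hDr, hr⟩ := exists_between (lt_min hD ((ENNReal.lt_rpow_inv_iff hs).2 hDs))
  obtain ⟨hrδ, hrs⟩ := lt_min_iff.1 hr
  exact ⟨r, hDr, hrδ, ((ENNReal.lt_rpow_inv_iff hs).1 hrs).le⟩

lemma iSup_rpow_le_tsum {ι : Type*} {q : ℝ} (hq : 0 < q) (a : ι → ℝ≥0∞) :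
    (⨆ i, a i) ^ q ≤ ∑' i, a i ^ q := by
  rw [← ENNReal.le_rpow_inv_iff hq]
  exact iSup_le fun i => (ENNReal.le_rpow_inv_iff hq).2 (ENNReal.le_tsum i)

section Lintegral

variable {M : Type*} [MeasurableSpace M] {μ : Measure M}

lemma lintegral_iSup_rpow_le_tsum {ι : Type*} [Countable ι] {q : ℝ} (hq : 0 < q)
    {f : ι → M → ℝ≥0∞} (hf : ∀ i, Measurable (f i)) :
    ∫⁻ x, (⨆ i, f i x) ^ q ∂μ ≤ ∑' i, ∫⁻ x, f i x ^ q ∂μ :=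
  calc ∫⁻ x, (⨆ i, f i x) ^ q ∂μ
      ≤ ∫⁻ x, ∑' i, f i x ^ q ∂μ := lintegral_mono fun _ => iSup_rpow_le_tsum hq _
    _ = ∑' i, ∫⁻ x, f i x ^ q ∂μ := lintegral_tsum fun i => ((hf i).pow_const q).aemeasurable

lemma lintegral_indicator_const_rpow {q : ℝ} (hq : 0 < q) {B : Set M} (hB : MeasurableSet B)
    (w : ℝ≥0∞) : ∫⁻ x, B.indicator (fun _ => w) x ^ q ∂μ = w ^ q * μ B := by
  rw [← lintegral_indicator_const hB]
  refine lintegral_congr fun x => ?_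
  exact (congrFun (indicator_comp_of_zero (g := (· ^ q)) (ENNReal.zero_rpow_of_pos hq)) x).symm

lemma lintegral_convexComb_rpow_le {p : ℝ} (hp : 1 ≤ p) {f h : M → ℝ≥0∞} (hf : Measurable f)
    (hh : Measurable h) {V : Set M} (hV : MeasurableSet V) {s t : ℝ≥0∞} (hst : s + t = 1) :
    ∫⁻ x, (s * f x + t * h x) ^ p ∂μ ≤ s * ∫⁻ x, f x ^ p ∂μ + t * ∫⁻ x in Vᶜ, h x ^ p ∂μ +
      2 ^ (p - 1) * (∫⁻ x in V, f x ^ p ∂μ + t ^ p * ∫⁻ x, h x ^ p ∂μ) := by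
  have hfp : Measurable fun x => f x ^ p := hf.pow_const p
  have hhp : Measurable fun x => h x ^ p := hh.pow_const p
  have hs : s ≤ 1 := hst ▸ le_self_add
  have hinside : ∫⁻ x in V, (s * f x + t * h x) ^ p ∂μ ≤
      2 ^ (p - 1) * (∫⁻ x in V, f x ^ p ∂μ + t ^ p * ∫⁻ x, h x ^ p ∂μ) :=
    calc ∫⁻ x in V, (s * f x + t * h x) ^ p ∂μ
        ≤ ∫⁻ x in V, 2 ^ (p - 1) * (f x ^ p + t ^ p * h x ^ p) ∂μ := by
          refine lintegral_mono fun x => (ENNReal.rpow_add_le_mul_rpow_add_rpow _ _ hp).trans ?_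
          rw [ENNReal.mul_rpow_of_nonneg t _ (by linarith)]
          gcongr
          exact mul_le_of_le_one_left' hs
      _ = 2 ^ (p - 1) * (∫⁻ x in V, f x ^ p ∂μ + t ^ p * ∫⁻ x in V, h x ^ p ∂μ) := by
          rw [lintegral_const_mul _ (by fun_prop), lintegral_add_left hfp,
            lintegral_const_mul _ hhp]
      _ ≤ _ := by gcongr; exact Measure.restrict_le_self
  have houtside : ∫⁻ x in Vᶜ, (s * f x + t * h x) ^ p ∂μ ≤
      s * ∫⁻ x, f x ^ p ∂μ + t * ∫⁻ x in Vᶜ, h x ^ p ∂μ :=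
    calc ∫⁻ x in Vᶜ, (s * f x + t * h x) ^ p ∂μ
        ≤ ∫⁻ x in Vᶜ, s * f x ^ p + t * h x ^ p ∂μ :=
          lintegral_mono fun x =>
            ENNReal.rpow_arith_mean_le_arith_mean2_rpow s t (f x) (h x) hst hp
      _ = s * ∫⁻ x in Vᶜ, f x ^ p ∂μ + t * ∫⁻ x in Vᶜ, h x ^ p ∂μ := by
          rw [lintegral_add_left (hfp.const_mul s), lintegral_const_mul _ hfp,
            lintegral_const_mul _ hhp]
      _ ≤ _ := by gcongr; exact Measure.restrict_le_self
  rw [← lintegral_add_compl _ hV, add_comm]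
  exact add_le_add houtside hinside

lemma setLIntegral_compl_one_le_rpow_le {p : ℝ} (hp : 1 ≤ p) {h : M → ℝ≥0∞} (hh : Measurable h) :
    ∫⁻ x in {x | 1 ≤ h x}ᶜ, h x ^ p ∂μ ≤ ∫⁻ x, h x ∂μ :=
  (setLIntegral_mono hh fun _ hx =>
    ENNReal.rpow_le_self_of_le_one (not_le.1 hx).le hp).trans (setLIntegral_le_lintegral _ _)

end Lintegral

/-- `f` competes in the infimum defining `rcapK μ p g E`. -/
def IsAdmissible {M : Type*} [MeasurableSpace M] (μ : Measure M) (g : M → M → ℝ≥0∞) (E : Set M)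
    (f : M → ℝ≥0∞) : Prop :=
  Measurable f ∧ ∀ x ∈ E, 1 ≤ ∫⁻ y, g x y * f y ∂μ

section Capacity

variable {M : Type*} [MeasurableSpace M] {μ : Measure M} {p : ℝ} {g : M → M → ℝ≥0∞} {E F : Set M}

lemma IsAdmissible.mono {f : M → ℝ≥0∞} (hf : IsAdmissible μ g F f) (hEF : E ⊆ F) :
    IsAdmissible μ g E f :=
  ⟨hf.1, fun x hx => hf.2 x (hEF hx)⟩

lemma IsAdmissible.iSup {ι : Type*} [Countable ι] {E : ι → Set M} {f : ι → M → ℝ≥0∞}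
    (hf : ∀ i, IsAdmissible μ g (E i) (f i)) :
    IsAdmissible μ g (⋃ i, E i) fun y => ⨆ i, f i y := by
  refine ⟨.iSup fun i => (hf i).1, fun x hx => ?_⟩
  obtain ⟨i, hi⟩ := mem_iUnion.1 hx
  refine ((hf i).2 x hi).trans (lintegral_mono fun y => ?_)
  gcongr
  exact le_iSup (fun j => f j y) i

lemma IsAdmissible.convexComb {f h : M → ℝ≥0∞} (hf : IsAdmissible μ g E f)
    (hh : IsAdmissible μ g E h) {s t : ℝ≥0∞} (hst : s + t = 1) :
    IsAdmissible μ g E fun y => s * f y + t * h y := by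
  refine ⟨(hf.1.const_mul s).add (hh.1.const_mul t), fun x hx => ?_⟩
  calc 1 = s * 1 + t * 1 := by rw [mul_one, mul_one, hst]
    _ ≤ s * ∫⁻ y, g x y * f y ∂μ + t * ∫⁻ y, g x y * h y ∂μ := by
        gcongr
        exacts [hf.2 x hx, hh.2 x hx]
    _ ≤ ∫⁻ y, s * (g x y * f y) ∂μ + ∫⁻ y, t * (g x y * h y) ∂μ :=
        add_le_add (lintegral_const_mul_le _ _) (lintegral_const_mul_le _ _)
    _ ≤ ∫⁻ y, s * (g x y * f y) + t * (g x y * h y) ∂μ := le_lintegral_add _ _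
    _ = ∫⁻ y, g x y * (s * f y + t * h y) ∂μ := by simp only [mul_add, mul_left_comm]

lemma exists_isAdmissible_of_le_kernel {B : Set M} (hB : MeasurableSet B) (hBtop : μ B ≠ ∞)
    {k m : ℝ≥0∞} (hk : k ≠ 0) (hktop : k ≠ ∞) (hm : m ≠ 0) (hmB : m ≤ μ B)
    (hkg : ∀ y ∈ B, ∀ z ∈ B, k ≤ g y z) :
    ∃ φ, IsAdmissible μ g B φ ∧
      ∀ q : ℝ, 1 ≤ q → ∫⁻ x, φ x ^ q ∂μ ≤ k ^ (-q) * m ^ (1 - q) := by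
  have hB0 : μ B ≠ 0 := fun h => hm (nonpos_iff_eq_zero.1 (hmB.trans_eq h))
  set w := (k * μ B)⁻¹ with hw
  refine ⟨B.indicator fun _ => w, ⟨measurable_const.indicator hB, fun y hy => ?_⟩, fun q hq => ?_⟩
  · calc 1 = k * w * μ B := by
          rw [mul_right_comm, hw, ENNReal.mul_inv_cancel (mul_ne_zero hk hB0)
            (mul_ne_top hktop hBtop)]
      _ = ∫⁻ z, B.indicator (fun _ => k * w) z ∂μ := (lintegral_indicator_const hB _).symm
      _ ≤ ∫⁻ z, g y z * B.indicator (fun _ => w) z ∂μ := by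
          refine lintegral_mono fun z => ?_
          by_cases hz : z ∈ B
          · simp only [indicator_of_mem hz]
            exact mul_le_mul_left (hkg y hy z hz) w
          · simp only [indicator_of_notMem hz, mul_zero, le_refl]
  · calc ∫⁻ x, B.indicator (fun _ => w) x ^ q ∂μ
        = w ^ q * μ B := lintegral_indicator_const_rpow (by linarith) hB w
      _ = k ^ (-q) * μ B ^ (1 - q) := by
          rw [hw, ENNReal.inv_rpow, ← ENNReal.rpow_neg, ENNReal.mul_rpow_of_ne_top hktop hBtop,
            sub_eq_neg_add, ENNReal.rpow_add _ _ hB0 hBtop, ENNReal.rpow_one, mul_assoc]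
      _ ≤ k ^ (-q) * m ^ (1 - q) :=
          mul_le_mul_right (ennreal_rpow_le_rpow_of_nonpos hmB (sub_nonpos.2 hq)) _

lemma rcapK_le {f : M → ℝ≥0∞} (hf : IsAdmissible μ g E f) :
    rcapK μ p g E ≤ ∫⁻ x, f x ^ p ∂μ :=
  iInf₂_le f hf

lemma exists_isAdmissible_lintegral_rpow_lt {c : ℝ≥0∞} (hc : rcapK μ p g E < c) :
    ∃ f, IsAdmissible μ g E f ∧ ∫⁻ x, f x ^ p ∂μ < c := by
  simp only [rcapK, iInf_lt_iff] at hc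
  obtain ⟨f, hf, hlt⟩ := hc
  exact ⟨f, hf, hlt⟩

lemma rcapK_mono (hEF : E ⊆ F) : rcapK μ p g E ≤ rcapK μ p g F :=
  le_iInf₂ fun _ hf => rcapK_le (IsAdmissible.mono hf hEF)

lemma rcapK_iUnion_eq_zero {ι : Type*} [Countable ι] (hp : 0 < p) {E : ι → Set M}
    (hE : ∀ i, rcapK μ p g (E i) = 0) : rcapK μ p g (⋃ i, E i) = 0 := by
  refine nonpos_iff_eq_zero.1 (le_of_forall_gt fun ε hε => ?_)
  obtain ⟨δ, hδ, hsum⟩ := ENNReal.exists_pos_sum_of_countable' hε.ne' ι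
  choose f hf hfp using fun i => exists_isAdmissible_lintegral_rpow_lt ((hE i).trans_lt (hδ i))
  calc rcapK μ p g (⋃ i, E i) ≤ ∫⁻ x, (⨆ i, f i x) ^ p ∂μ := rcapK_le (.iSup hf)
    _ ≤ ∑' i, ∫⁻ x, f i x ^ p ∂μ := lintegral_iSup_rpow_le_tsum hp fun i => (hf i).1
    _ ≤ ∑' i, δ i := ENNReal.tsum_le_tsum fun i => (hfp i).le
    _ < ε := hsum

lemma rcapK_le_mul_rcapK_add (hp : 1 ≤ p) (hfin : rcapK μ p g E ≠ ∞) {A : ℝ≥0∞}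
    (hsmall : ∀ ε > 0, ∃ h, IsAdmissible μ g E h ∧ ∫⁻ x, h x ^ p ∂μ ≤ A ∧ ∫⁻ x, h x ∂μ < ε)
    {s t : ℝ≥0∞} (hst : s + t = 1) :
    rcapK μ p g E ≤ s * rcapK μ p g E + 2 ^ (p - 1) * (t ^ p * A) := by
  have hK : (2 : ℝ≥0∞) ^ (p - 1) ≠ ∞ := ENNReal.rpow_ne_top_of_ne_zero two_ne_zero ofNat_ne_top
  refine ENNReal.le_of_forall_pos_le_add fun ε hε _ => ?_
  obtain ⟨η, hη, hηε⟩ := ENNReal.exists_pos_mul_lt (add_ne_top.2 ⟨one_ne_top, hK⟩)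
    (ENNReal.coe_pos.2 hε).ne'
  obtain ⟨f, hf, hfη⟩ := exists_isAdmissible_lintegral_rpow_lt (ENNReal.lt_add_right hfin hη.ne')
  obtain ⟨δ, hδ, hfδ⟩ := exists_pos_setLIntegral_lt_of_measure_lt hfη.ne_top hη.ne'
  obtain ⟨h, hh, hhA, hhlt⟩ := hsmall (min δ η) (lt_min hδ hη)
  obtain ⟨hhδ, hhη⟩ := lt_min_iff.1 hhlt
  have hfV : ∫⁻ x in {x | 1 ≤ h x}, f x ^ p ∂μ ≤ η := by
    refine (hfδ _ (lt_of_le_of_lt ?_ hhδ)).le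
    simpa only [one_mul] using mul_meas_ge_le_lintegral hh.1 1
  have hhV : ∫⁻ x in {x | 1 ≤ h x}ᶜ, h x ^ p ∂μ ≤ η :=
    (setLIntegral_compl_one_le_rpow_le hp hh.1).trans hhη.le
  calc rcapK μ p g E
      ≤ ∫⁻ x, (s * f x + t * h x) ^ p ∂μ := rcapK_le (hf.convexComb hh hst)
    _ ≤ s * ∫⁻ x, f x ^ p ∂μ + t * ∫⁻ x in {x | 1 ≤ h x}ᶜ, h x ^ p ∂μ + 2 ^ (p - 1) *
          (∫⁻ x in {x | 1 ≤ h x}, f x ^ p ∂μ + t ^ p * ∫⁻ x, h x ^ p ∂μ) :=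
        lintegral_convexComb_rpow_le hp hf.1 hh.1 (measurableSet_le measurable_const hh.1) hst
    _ ≤ s * (rcapK μ p g E + η) + t * η + 2 ^ (p - 1) * (η + t ^ p * A) := by gcongr
    _ = s * rcapK μ p g E + 2 ^ (p - 1) * (t ^ p * A) + η * (s + t + 2 ^ (p - 1)) := by ring
    _ ≤ s * rcapK μ p g E + 2 ^ (p - 1) * (t ^ p * A) + ε := by
        rw [hst]
        gcongr

theorem rcapK_eq_zero_of_lintegral_small (hp : 1 < p) {A : ℝ≥0∞} (hA : A ≠ ∞)
    (hsmall : ∀ ε > 0, ∃ h, IsAdmissible μ g E h ∧ ∫⁻ x, h x ^ p ∂μ ≤ A ∧ ∫⁻ x, h x ∂μ < ε) :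
    rcapK μ p g E = 0 := by
  have hfin : rcapK μ p g E ≠ ∞ := by
    obtain ⟨h, hh, hhA, -⟩ := hsmall 1 one_pos
    exact ne_top_of_le_ne_top hA ((rcapK_le hh).trans hhA)
  have hK : (2 : ℝ≥0∞) ^ (p - 1) ≠ ∞ := ENNReal.rpow_ne_top_of_ne_zero two_ne_zero ofNat_ne_top
  refine nonpos_iff_eq_zero.1 (le_of_forall_gt fun ε hε => ?_)
  obtain ⟨t, ht0, ht1, htε⟩ := exists_rpow_mul_lt (sub_pos.2 hp) one_pos (mul_ne_top hK hA) hε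
  refine lt_of_le_of_lt ?_ htε
  have ht : t ≠ ∞ := ht1.ne_top
  have hst : 1 - t + t = 1 := tsub_add_cancel_of_le ht1.le
  rw [← ENNReal.mul_le_mul_iff_right ht0.ne' ht]
  refine ENNReal.le_of_add_le_add_left
    (mul_ne_top (sub_ne_top one_ne_top) hfin : (1 - t) * rcapK μ p g E ≠ ∞) ?_
  calc (1 - t) * rcapK μ p g E + t * rcapK μ p g E
      = rcapK μ p g E := by rw [← add_mul, hst, one_mul]
    _ ≤ (1 - t) * rcapK μ p g E + 2 ^ (p - 1) * (t ^ p * A) :=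
        rcapK_le_mul_rcapK_add hp.le hfin hsmall hst
    _ = (1 - t) * rcapK μ p g E + t * (t ^ (p - 1) * (2 ^ (p - 1) * A)) := by
        rw [← add_sub_cancel 1 p, ENNReal.rpow_add _ _ ht0.ne' ht, ENNReal.rpow_one,
          add_sub_cancel]
        ring

end Capacity

section Hausdorff

variable {X : Type*} [EMetricSpace X] [MeasurableSpace X] [BorelSpace X]

lemma exists_cover_ediam_le_tsum_rpow_lt {s : ℝ} (hs : 0 < s) {E : Set X} {c δ : ℝ≥0∞}
    (hE : μH[s] E < c) (hδ : 0 < δ) :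
    ∃ t : ℕ → Set X, E ⊆ ⋃ n, t n ∧ (∀ n, ediam (t n) ≤ δ) ∧ ∑' n, ediam (t n) ^ s < c := by
  rw [Measure.hausdorffMeasure_apply] at hE
  have hlt := (le_iSup₂ (f := fun (r : ℝ≥0∞) (_ : 0 < r) => ⨅ (t : ℕ → Set X)
    (_ : E ⊆ ⋃ n, t n) (_ : ∀ n, ediam (t n) ≤ r),
      ∑' n, ⨆ _ : (t n).Nonempty, ediam (t n) ^ s) δ hδ).trans_lt hE
  simp only [iInf_lt_iff] at hlt
  obtain ⟨t, hEt, htδ, htc⟩ := hlt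
  refine ⟨t, hEt, htδ, (ENNReal.tsum_le_tsum fun n => ?_).trans_lt htc⟩
  rcases (t n).eq_empty_or_nonempty with hempty | hne
  · simp [hempty, ENNReal.zero_rpow_of_pos hs]
  · rw [ciSup_pos hne]

lemma exists_eball_cover_tsum_rpow_le {s : ℝ} (hs : 0 < s) {E : Set X} {c δ : ℝ≥0∞}
    (hE : μH[s] E < c) (hδ : 0 < δ) :
    ∃ (N : Set ℕ) (x : N → X) (r : N → ℝ≥0∞), (∀ i, x i ∈ E ∧ 0 < r i ∧ r i < δ) ∧
      E ⊆ ⋃ i, eball (x i) (r i) ∧ ∑' i, r i ^ s ≤ c := by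
  obtain ⟨δ', hδ', hδ'δ⟩ := exists_between hδ
  obtain ⟨t, hEt, htδ, htc⟩ := exists_cover_ediam_le_tsum_rpow_lt hs hE hδ'
  obtain ⟨ε, hε, hεc⟩ := ENNReal.exists_pos_sum_of_countable' (tsub_pos_of_lt htc).ne' ℕ
  choose r hDr hrδ hrs using fun n =>
    exists_gt_lt_rpow_le_add hs ((htδ n).trans_lt hδ'δ) (hε n)
  choose x hxt hxE using fun i : {n | (t n ∩ E).Nonempty} => i.2
  refine ⟨_, x, fun i => r i, fun i => ⟨hxE i, pos_of_gt (hDr i), hrδ i⟩, fun y hy => ?_, ?_⟩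
  · obtain ⟨n, hn⟩ := mem_iUnion.1 (hEt hy)
    let i : {n | (t n ∩ E).Nonempty} := ⟨n, y, hn, hy⟩
    exact mem_iUnion.2 ⟨i, (edist_le_ediam_of_mem hn (hxt i)).trans_lt (hDr n)⟩
  · calc ∑' i : {n | (t n ∩ E).Nonempty}, r i ^ s
        ≤ ∑' n, r n ^ s :=
          ENNReal.tsum_comp_le_tsum_of_injective Subtype.val_injective fun n => r n ^ s
      _ ≤ ∑' n, (ediam (t n) ^ s + ε n) := ENNReal.tsum_le_tsum hrs
      _ = ∑' n, ediam (t n) ^ s + ∑' n, ε n := ENNReal.tsum_add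
      _ ≤ ∑' n, ediam (t n) ^ s + (c - ∑' n, ediam (t n) ^ s) := by gcongr
      _ = c := add_tsub_cancel_of_le htc.le

end Hausdorff

/-- The local hypotheses on volume and kernel of order `α` hold at `x` at every scale below `a`,
with the one parameter `a` also serving as the lower constant in both bounds. For `y = z`
and `α < d` the kernel bound says `g y y = ∞`, since `0 ^ (α - d) = ∞` in `ℝ≥0∞`. -/
structure HasLocalBounds {M : Type*} [EDist M] [MeasurableSpace M] (μ : Measure M)
    (g : M → M → ℝ≥0∞) (α d : ℝ) (a : ℝ≥0∞) (x : M) : Prop where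
  measure_ne_top : μ (eball x a) ≠ ∞
  le_measure : ∀ r, 0 < r → r < a → a * r ^ d ≤ μ (eball x r)
  le_kernel : ∀ y ∈ eball x a, ∀ z ∈ eball x a, a * edist y z ^ (α - d) ≤ g y z

lemma HasLocalBounds.anti {M : Type*} [PseudoEMetricSpace M] [MeasurableSpace M] {μ : Measure M}
    {g : M → M → ℝ≥0∞} {α d : ℝ} {a b : ℝ≥0∞} {x : M} (h : HasLocalBounds μ g α d a x)
    (hba : b ≤ a) : HasLocalBounds μ g α d b x where
  measure_ne_top := ne_top_of_le_ne_top h.measure_ne_top (measure_mono (eball_subset_eball hba))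
  le_measure r hr0 hrb := (mul_le_mul_left hba _).trans (h.le_measure r hr0 (hrb.trans_le hba))
  le_kernel y hy z hz := (mul_le_mul_left hba _).trans
    (h.le_kernel y (eball_subset_eball hba hy) z (eball_subset_eball hba hz))

lemma exists_mul_rpow_le_measure_eball {M : Type*} [PseudoMetricSpace M] [MeasurableSpace M]
    {μ : Measure M} {d : ℝ} {x : M}
    (hvol : 0 < liminf (fun r : ℝ => μ (ball x r) / ENNReal.ofReal (r ^ d))
      (nhdsWithin 0 (Ioi 0))) :
    ∃ a > 0, ∀ r, 0 < r → r < a → a * r ^ d ≤ μ (eball x r) := by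
  obtain ⟨b, hb, hbvol⟩ := exists_between hvol
  obtain ⟨ρ, hρ, hvol⟩ := mem_nhdsGT_iff_exists_Ioo_subset.1 (eventually_lt_of_lt_liminf hbvol)
  refine ⟨min b (ENNReal.ofReal ρ), lt_min hb (ofReal_pos.2 hρ), fun r hr0 hra => ?_⟩
  lift r to NNReal using hra.ne_top
  have hr0 : (0 : ℝ) < r := by simpa using hr0
  have hrρ : (r : ℝ) < ρ := by
    simpa using ENNReal.toReal_lt_of_lt_ofReal (hra.trans_le (min_le_right _ _))
  have hbr := ENNReal.mul_le_of_le_div (hvol ⟨hr0, hrρ⟩).le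
  rw [← ENNReal.ofReal_rpow_of_pos hr0, ← eball_ofReal, ENNReal.ofReal_coe_nnreal] at hbr
  exact (mul_le_mul_left (min_le_left _ _) _).trans hbr

lemma exists_hasLocalBounds {M : Type*} [PseudoMetricSpace M] [MeasurableSpace M] {μ : Measure M}
    [IsLocallyFiniteMeasure μ] {g : M → M → ℝ≥0∞} {α d : ℝ} {x : M}
    (hvol : 0 < liminf (fun r : ℝ => μ (ball x r) / ENNReal.ofReal (r ^ d)) (nhdsWithin 0 (Ioi 0)))
    (hker : ∃ r > (0 : ℝ), ∃ c > (0 : ℝ), ∀ y ∈ ball x r, ∀ z ∈ ball x r,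
      ENNReal.ofReal c * edist y z ^ (α - d) ≤ g y z) :
    ∃ a > 0, HasLocalBounds μ g α d a x := by
  obtain ⟨b, hb, hvol⟩ := exists_mul_rpow_le_measure_eball hvol
  obtain ⟨ρ, hρ, c, hc, hker⟩ := hker
  obtain ⟨u, hu, hμu⟩ := μ.finiteAt_nhds x
  obtain ⟨R, hR, hRu⟩ := EMetric.mem_nhds_iff.1 hu
  obtain ⟨a, ha, halt⟩ := exists_between
    (lt_min (lt_min hb hR) (lt_min (ofReal_pos.2 hρ) (ofReal_pos.2 hc)))
  simp only [lt_min_iff] at halt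
  obtain ⟨⟨hab, haR⟩, haρ, hac⟩ := halt
  have hsub : eball x a ⊆ ball x ρ := by
    rw [← eball_ofReal]
    exact eball_subset_eball haρ.le
  exact ⟨a, ha,
    { measure_ne_top := measure_ne_top_of_subset ((eball_subset_eball haR.le).trans hRu) hμu.ne
      le_measure := fun r hr hra =>
        (mul_le_mul_left hab.le _).trans (hvol r hr (hra.trans hab))
      le_kernel := fun y hy z hz =>
        (mul_le_mul_left hac.le _).trans (hker y (hsub hy) z (hsub hz)) }⟩

lemma HasLocalBounds.exists_isAdmissible_eball {M : Type*} [PseudoEMetricSpace M]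
    [MeasurableSpace M] [OpensMeasurableSpace M] {μ : Measure M} {g : M → M → ℝ≥0∞} {α d : ℝ}
    {a r : ℝ≥0∞} {x : M} (h : HasLocalBounds μ g α d a x) (ha : a ≠ ∞) (hαd : α ≤ d)
    (hr : 0 < r) (hra : r < a) :
    ∃ φ, IsAdmissible μ g (eball x r) φ ∧ ∀ q : ℝ, 1 ≤ q →
      ∫⁻ y, φ y ^ q ∂μ ≤ (a * 2 ^ (α - d)) ^ (-q) * a ^ (1 - q) * r ^ (d - α * q) := by
  have hrtop : r ≠ ∞ := hra.ne_top
  have ha0 : a ≠ 0 := (pos_of_gt hra).ne'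
  have hrpow (u : ℝ) : r ^ u ≠ 0 ∧ r ^ u ≠ ∞ :=
    ⟨(ENNReal.rpow_pos hr hrtop).ne', ENNReal.rpow_ne_top_of_ne_zero hr.ne' hrtop⟩
  have hsub : eball x r ⊆ eball x a := eball_subset_eball hra.le
  set κ := a * 2 ^ (α - d)
  have hκ : κ ≠ 0 ∧ κ ≠ ∞ :=
    ⟨mul_ne_zero ha0 (ENNReal.rpow_pos two_pos ofNat_ne_top).ne',
      mul_ne_top ha (ENNReal.rpow_ne_top_of_ne_zero two_ne_zero ofNat_ne_top)⟩
  have hkernel : ∀ y ∈ eball x r, ∀ z ∈ eball x r, κ * r ^ (α - d) ≤ g y z := fun y hy z hz => by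
    have hyz : edist y z ≤ 2 * r := by
      rw [two_mul]
      exact (edist_triangle_right y z x).trans (add_le_add hy.le hz.le)
    calc κ * r ^ (α - d) = a * (2 * r) ^ (α - d) := by
          rw [ENNReal.mul_rpow_of_ne_top ofNat_ne_top hrtop, mul_assoc]
      _ ≤ a * edist y z ^ (α - d) := by
          exact mul_le_mul_right
            (ennreal_rpow_le_rpow_of_nonpos hyz (sub_nonpos.2 hαd)) a
      _ ≤ g y z := h.le_kernel y (hsub hy) z (hsub hz)
  obtain ⟨φ, hφ, hφq⟩ := exists_isAdmissible_of_le_kernel measurableSet_eball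
    (measure_ne_top_of_subset hsub h.measure_ne_top) (mul_ne_zero hκ.1 (hrpow _).1)
    (mul_ne_top hκ.2 (hrpow _).2) (mul_ne_zero ha0 (hrpow _).1) (h.le_measure r hr hra) hkernel
  refine ⟨φ, hφ, fun q hq => (hφq q hq).trans_eq ?_⟩
  rw [ENNReal.mul_rpow_of_ne_top hκ.2 (hrpow _).2, ENNReal.mul_rpow_of_ne_top ha (hrpow _).2,
    ← ENNReal.rpow_mul, ← ENNReal.rpow_mul, mul_mul_mul_comm,
    ← ENNReal.rpow_add _ _ hr.ne' hrtop]
  ring_nf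

section SmallTestFunctions

variable {M : Type*} [EMetricSpace M] [MeasurableSpace M] [BorelSpace M] {μ : Measure M}
  {g : M → M → ℝ≥0∞} {α p d : ℝ} {a : ℝ≥0∞} {E : Set M}

lemma exists_isAdmissible_lintegral_rpow_le_of_hasLocalBounds (hα : 0 ≤ α) (hαd : α ≤ d)
    (hpd : α * p < d) (ha : a ≠ ∞) (hE : ∀ x ∈ E, HasLocalBounds μ g α d a x) {c δ : ℝ≥0∞}
    (hH : μH[d - α * p] E < c) (hδ : 0 < δ) (hδa : δ ≤ a) :
    ∃ h, IsAdmissible μ g E h ∧ ∀ q : ℝ, 1 ≤ q → q ≤ p → ∫⁻ y, h y ^ q ∂μ ≤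
      (a * 2 ^ (α - d)) ^ (-q) * a ^ (1 - q) * (δ ^ (α * (p - q)) * c) := by
  obtain ⟨N, x, r, hxr, hEN, hrc⟩ := exists_eball_cover_tsum_rpow_le (sub_pos.2 hpd) hH hδ
  choose φ hφ hφq using fun i => (hE (x i) (hxr i).1).exists_isAdmissible_eball ha hαd
    (hxr i).2.1 ((hxr i).2.2.trans_le hδa)
  refine ⟨_, (IsAdmissible.iSup hφ).mono hEN, fun q hq hqp => ?_⟩
  set C := (a * 2 ^ (α - d)) ^ (-q) * a ^ (1 - q)
  have hscale (i) : r i ^ (d - α * q) ≤ δ ^ (α * (p - q)) * r i ^ (d - α * p) := by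
    obtain ⟨-, hr0, hrδ⟩ := hxr i
    rw [show d - α * q = α * (p - q) + (d - α * p) by ring,
      ENNReal.rpow_add _ _ hr0.ne' hrδ.ne_top]
    exact mul_le_mul_left
      (ENNReal.rpow_le_rpow hrδ.le (mul_nonneg hα (sub_nonneg.2 hqp))) _
  calc ∫⁻ y, (⨆ i, φ i y) ^ q ∂μ
      ≤ ∑' i, ∫⁻ y, φ i y ^ q ∂μ := lintegral_iSup_rpow_le_tsum (by linarith) fun i => (hφ i).1
    _ ≤ ∑' i, C * (δ ^ (α * (p - q)) * r i ^ (d - α * p)) :=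
        ENNReal.tsum_le_tsum fun i => (hφq i q hq).trans (mul_le_mul_right (hscale i) C)
    _ = C * (δ ^ (α * (p - q)) * ∑' i, r i ^ (d - α * p)) := by
        rw [ENNReal.tsum_mul_left, ENNReal.tsum_mul_left]
    _ ≤ C * (δ ^ (α * (p - q)) * c) := by gcongr

theorem rcapK_eq_zero_of_hasLocalBounds (hα : 0 < α) (hp : 1 < p) (hpd : α * p < d) (ha0 : a ≠ 0)
    (ha : a ≠ ∞) (hE : ∀ x ∈ E, HasLocalBounds μ g α d a x) (hH : μH[d - α * p] E < ∞) :
    rcapK μ p g E = 0 := by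
  have hαd : α ≤ d := by nlinarith
  obtain ⟨c, hHc, hc⟩ := exists_between hH
  set C : ℝ → ℝ≥0∞ := fun q => (a * 2 ^ (α - d)) ^ (-q) * a ^ (1 - q)
  have hC (q : ℝ) : C q ≠ ∞ := by
    have h2 : (2 : ℝ≥0∞) ^ (α - d) ≠ 0 := (ENNReal.rpow_pos two_pos ofNat_ne_top).ne'
    have h2' : (2 : ℝ≥0∞) ^ (α - d) ≠ ∞ :=
      ENNReal.rpow_ne_top_of_ne_zero two_ne_zero ofNat_ne_top
    exact mul_ne_top (ENNReal.rpow_ne_top_of_ne_zero (mul_ne_zero ha0 h2) (mul_ne_top ha h2'))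
      (ENNReal.rpow_ne_top_of_ne_zero ha0 ha)
  refine rcapK_eq_zero_of_lintegral_small hp (mul_ne_top (hC p) hc.ne) fun ε hε => ?_
  obtain ⟨δ, hδ, hδa, hδε⟩ := exists_rpow_mul_lt (mul_pos hα (sub_pos.2 hp))
    (pos_iff_ne_zero.2 ha0) (mul_ne_top (hC 1) hc.ne) hε
  obtain ⟨h, hh, hhq⟩ := exists_isAdmissible_lintegral_rpow_le_of_hasLocalBounds hα.le hαd hpd ha
    hE hHc hδ hδa.le
  refine ⟨h, hh, (hhq p hp.le le_rfl).trans_eq ?_, ?_⟩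
  · rw [sub_self, mul_zero, ENNReal.rpow_zero, one_mul]
  · calc ∫⁻ y, h y ∂μ = ∫⁻ y, h y ^ (1 : ℝ) ∂μ := by simp only [ENNReal.rpow_one]
      _ ≤ C 1 * (δ ^ (α * (p - 1)) * c) := hhq 1 le_rfl hp.le
      _ = δ ^ (α * (p - 1)) * (C 1 * c) := mul_left_comm _ _ _
      _ < ε := hδε

end SmallTestFunctions

theorem stmt11_general {M : Type*} [MetricSpace M] [MeasurableSpace M] [BorelSpace M]
    {μ : Measure M} [IsLocallyFiniteMeasure μ] {g : M → M → ℝ≥0∞} {α p d : ℝ} (hα : 0 < α)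
    (hp : 1 < p) (hd : α * p < d) {S : Set M}
    (hvol : ∀ x ∈ S,
      0 < liminf (fun r : ℝ => μ (ball x r) / ENNReal.ofReal (r ^ d)) (nhdsWithin 0 (Ioi 0)))
    (hker : ∀ x ∈ S, ∃ r > (0 : ℝ), ∃ c > (0 : ℝ), ∀ y ∈ ball x r, ∀ z ∈ ball x r,
      ENNReal.ofReal c * edist y z ^ (α - d) ≤ g y z)
    (hH : μH[d - α * p] S < ∞) :
    rcapK μ p g S = 0 := by
  let E (n : ℕ) : Set M := {x ∈ S | HasLocalBounds μ g α d (n + 1 : ℝ≥0∞)⁻¹ x}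
  have hcover : S ⊆ ⋃ n, E n := fun x hx => by
    obtain ⟨a, ha, hax⟩ := exists_hasLocalBounds (hvol x hx) (hker x hx)
    obtain ⟨n, hn⟩ := ENNReal.exists_inv_nat_lt ha.ne'
    refine mem_iUnion.2 ⟨n, hx, hax.anti (le_trans ?_ hn.le)⟩
    exact ENNReal.inv_le_inv.2 le_self_add
  have hnull (n : ℕ) : rcapK μ p g (E n) = 0 :=
    rcapK_eq_zero_of_hasLocalBounds hα hp hd (by simp) (by simp) (fun x hx => hx.2)
      ((measure_mono (sep_subset S _)).trans_lt hH)
  exact nonpos_iff_eq_zero.1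
    ((rcapK_mono hcover).trans_eq (rcapK_iUnion_eq_zero (by linarith) hnull))

/-- if near every point of the closed set `S` the volume has positive
lower `d`-density and the resolvent density is bounded below by `c ϱ(y,z)^{2-d}`, and
if `d > 2p` and `H^{d-2p}(S) < ∞`, then `cap_{2,p}(S) = 0`. -/
theorem stmt11 {M : Type*} [MetricSpace M] [LocallyCompactSpace M]
    [TopologicalSpace.SeparableSpace M] [MeasurableSpace M] [BorelSpace M]
    (μ : Measure M) [μ.Regular]
    (g : M → M → ℝ≥0∞) (hsymm : ∀ x y, g x y = g y x)
    (p d : ℝ) (hp : 1 < p) (hd : 2 * p < d)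
    (S : Set M) (hS : IsClosed S)
    (hvol : ∀ x ∈ S,
      0 < Filter.liminf (fun r : ℝ => μ (Metric.ball x r) / ENNReal.ofReal (r ^ d))
        (nhdsWithin (0:ℝ) (Set.Ioi 0)))
    (hker : ∀ x ∈ S, ∃ r > (0:ℝ), ∃ c > (0:ℝ),
      ∀ y ∈ Metric.ball x r, ∀ z ∈ Metric.ball x r,
        ENNReal.ofReal c * edist y z ^ (2 - d) ≤ g y z)
    (hH : μH[d - 2 * p] S < ⊤) :
    rcapK μ p g S = 0 :=
  stmt11_general two_pos hp hd hvol hker hH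
end

section
/- Let (M,ϱ) be a complete separable metric space, d > 4, ε > 0, and Σ ⊆ M closed with H^{d−4+ε}(Σ) > 0. Assume g_λ(x,y) ≤ c₆ ϱ(x,y)^{2−d} and μ(B(x,r)) ≤ c₇ r^d for all x,y ∈ M, r > 0. Then cap_{2,2}(Σ) > 0. Equivalently, cap_{2,2}(Σ) = 0 implies H^{d−4+ε}(Σ) = 0 for all ε > 0. -/
open Set MeasureTheory ENNReal Metric

open Filter Topology

/-! The argument avoids Frostman measures. If the capacity vanishes, there are functions `f` with
`∫ f ^ p` arbitrarily small whose potential is as large as we like on `S`. By Hölder's inequality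
and a dyadic decomposition, the potential of `f` at `x` can only be large if the mass of
`f ^ p` on some ball `B(x, r)` exceeds `r ^ s`. Balls of this kind cover `S`, and a Vitali
subfamily of them shows that `S` has coverings with arbitrarily small `s`-dimensional
Hausdorff sums. -/

section RieszPotential

theorem ofReal_two_zpow_rpow (n : ℤ) (c : ℝ) :
    ENNReal.ofReal (2 ^ n) ^ c = ((2 : ℝ≥0∞) ^ c) ^ n := by
  rw [← Real.rpow_intCast, ← ENNReal.ofReal_rpow_of_pos two_pos, ENNReal.ofReal_ofNat,
    ← ENNReal.rpow_intCast, ← ENNReal.rpow_mul, ← ENNReal.rpow_mul, mul_comm]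

theorem inv_one_sub_two_rpow_ne_top {c : ℝ} (hc : c < 0) :
    (1 - (2 : ℝ≥0∞) ^ c)⁻¹ ≠ ∞ :=
  ENNReal.inv_ne_top.2
    (tsub_pos_of_lt (ENNReal.rpow_lt_one_of_one_lt_of_neg ENNReal.one_lt_two hc)).ne'

theorem two_rpow_ne_top (c : ℝ) : (2 : ℝ≥0∞) ^ c ≠ ∞ :=
  ENNReal.rpow_ne_top_of_ne_zero two_ne_zero ENNReal.ofNat_ne_top

theorem two_rpow_add (b c : ℝ) : (2 : ℝ≥0∞) ^ (b + c) = 2 ^ b * 2 ^ c :=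
  ENNReal.rpow_add b c two_ne_zero ENNReal.ofNat_ne_top

/-- The dyadic constant bounding `∫ ϱ(x, y) ^ (-β) dν(y)` for a measure `ν` with
`ν (B(x, r)) ≤ r ^ a` for `r ≤ 1` and `ν (B(x, r)) ≤ r ^ b` for `r ≥ 1`. The second summand comes
from the balls of radius at most `1`; the constant is `∞` unless `b < β < a`. -/
noncomputable def rieszBound (β a b : ℝ) : ℝ≥0∞ :=
  2 ^ b * (1 - 2 ^ (b - β))⁻¹ + 2 ^ β * (1 - 2 ^ (β - a))⁻¹

theorem rieszBound_ne_top {β a b : ℝ} (hβa : β < a) (hbβ : b < β) : rieszBound β a b ≠ ∞ :=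
  ENNReal.add_ne_top.2
    ⟨ENNReal.mul_ne_top (two_rpow_ne_top b) (inv_one_sub_two_rpow_ne_top (sub_neg.2 hbβ)),
      ENNReal.mul_ne_top (two_rpow_ne_top β) (inv_one_sub_two_rpow_ne_top (sub_neg.2 hβa))⟩

theorem ofReal_two_zpow_rpow_neg_mul_le {A B : ℝ≥0∞} {β c : ℝ} {n : ℤ}
    (hB : B ≤ A * ENNReal.ofReal (2 ^ (n + 1)) ^ c) :
    ENNReal.ofReal (2 ^ n) ^ (-β) * B ≤ A * 2 ^ c * (2 ^ (c - β)) ^ n :=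
  calc ENNReal.ofReal (2 ^ n) ^ (-β) * B
      ≤ ENNReal.ofReal (2 ^ n) ^ (-β) * (A * ENNReal.ofReal (2 ^ (n + 1)) ^ c) := by gcongr
    _ = A * 2 ^ c * (2 ^ (c - β)) ^ n := by
      simp only [ofReal_two_zpow_rpow, ← ENNReal.rpow_intCast, ← ENNReal.rpow_mul]
      rw [mul_left_comm, mul_assoc, ← two_rpow_add, ← two_rpow_add]
      push_cast
      ring_nf

variable {M : Type*} [PseudoMetricSpace M]

theorem edist_rpow_neg_le_tsum_indicator_ball {β : ℝ} (hβ : 0 < β) (x y : M) :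
    edist x y ^ (-β) ≤
      ∑' n : ℤ, (ball x (2 ^ (n + 1))).indicator
        (fun _ => ENNReal.ofReal (2 ^ n) ^ (-β)) y := by
  rcases (dist_nonneg (x := y) (y := x)).eq_or_lt with h0 | hpos
  · calc edist x y ^ (-β) ≤ ∑' _ : ℕ, 1 := by
          rw [ENNReal.tsum_const_eq_top_of_ne_zero one_ne_zero]
          exact le_top
      _ ≤ ∑' j : ℕ, (ball x (2 ^ (-(j : ℤ) + 1))).indicator
            (fun _ => ENNReal.ofReal (2 ^ (-(j : ℤ))) ^ (-β)) y := by
          refine ENNReal.tsum_le_tsum fun j => ?_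
          rw [indicator_of_mem (mem_ball.2 (h0.symm.trans_lt (by positivity)))]
          refine ENNReal.one_le_rpow_of_pos_of_le_one_of_neg (by simp) ?_ (by simpa)
          rw [ENNReal.ofReal_le_one]
          exact zpow_le_one_of_nonpos₀ one_le_two (by simp)
      _ ≤ _ := ENNReal.tsum_comp_le_tsum_of_injective
          (f := fun j : ℕ => -(j : ℤ)) (neg_injective.comp Nat.cast_injective)
          fun n : ℤ => (ball x (2 ^ (n + 1))).indicator
            (fun _ => ENNReal.ofReal (2 ^ n) ^ (-β)) y
  · obtain ⟨n, hn, hn'⟩ := exists_mem_Ico_zpow hpos one_lt_two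
    refine le_trans ?_ (ENNReal.le_tsum n)
    rw [indicator_of_mem (mem_ball.2 hn'), edist_comm, edist_dist,
      ENNReal.rpow_neg, ENNReal.rpow_neg, ENNReal.inv_le_inv]
    gcongr

variable [MeasurableSpace M] [OpensMeasurableSpace M]

theorem lintegral_edist_rpow_neg_le_tsum_measure_ball (ν : Measure M) {β : ℝ} (hβ : 0 < β)
    (x : M) :
    ∫⁻ y, edist x y ^ (-β) ∂ν ≤
      ∑' n : ℤ, ENNReal.ofReal (2 ^ n) ^ (-β) * ν (ball x (2 ^ (n + 1))) :=
  calc ∫⁻ y, edist x y ^ (-β) ∂ν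
      ≤ ∫⁻ y, ∑' n : ℤ, (ball x (2 ^ (n + 1))).indicator
          (fun _ => ENNReal.ofReal (2 ^ n) ^ (-β)) y ∂ν :=
        lintegral_mono fun y => edist_rpow_neg_le_tsum_indicator_ball hβ x y
    _ = ∑' n : ℤ, ENNReal.ofReal (2 ^ n) ^ (-β) * ν (ball x (2 ^ (n + 1))) := by
        rw [lintegral_tsum fun n => (measurable_const.indicator measurableSet_ball).aemeasurable]
        simp only [lintegral_indicator_const measurableSet_ball]

theorem lintegral_edist_rpow_neg_le {ν : Measure M} {x : M} {A : ℝ≥0∞} {β a b : ℝ} (hβ : 0 < β)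
    (hsmall : ∀ r : ℝ, 0 < r → r ≤ 1 → ν (ball x r) ≤ A * ENNReal.ofReal r ^ a)
    (hlarge : ∀ r : ℝ, 1 ≤ r → ν (ball x r) ≤ A * ENNReal.ofReal r ^ b) :
    ∫⁻ y, edist x y ^ (-β) ∂ν ≤ A * rieszBound β a b :=
  calc ∫⁻ y, edist x y ^ (-β) ∂ν
      ≤ ∑' n : ℤ, ENNReal.ofReal (2 ^ n) ^ (-β) * ν (ball x (2 ^ (n + 1))) :=
        lintegral_edist_rpow_neg_le_tsum_measure_ball ν hβ x
    _ = ∑' j : ℕ, ENNReal.ofReal (2 ^ (j : ℤ)) ^ (-β) * ν (ball x (2 ^ ((j : ℤ) + 1))) +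
        ∑' j : ℕ, ENNReal.ofReal (2 ^ (-((j : ℤ) + 1))) ^ (-β) *
          ν (ball x (2 ^ (-((j : ℤ) + 1) + 1))) :=
        tsum_of_nat_of_neg_add_one ENNReal.summable ENNReal.summable
    _ ≤ ∑' j : ℕ, A * 2 ^ b * (2 ^ (b - β)) ^ (j : ℤ) +
        ∑' j : ℕ, A * 2 ^ a * (2 ^ (a - β)) ^ (-((j : ℤ) + 1)) := by
        refine add_le_add
          (ENNReal.tsum_le_tsum fun j => ofReal_two_zpow_rpow_neg_mul_le (hlarge _ ?_))
          (ENNReal.tsum_le_tsum fun j => ofReal_two_zpow_rpow_neg_mul_le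
            (hsmall _ (by positivity) ?_))
        · exact one_le_zpow₀ one_le_two (by positivity)
        · exact zpow_le_one_of_nonpos₀ one_le_two (by simp)
    _ = ∑' j : ℕ, A * 2 ^ b * (2 ^ (b - β)) ^ j +
        ∑' j : ℕ, A * 2 ^ a * (2 ^ (β - a)) ^ (j + 1) := by
        simp only [zpow_natCast, ← Nat.cast_add_one, ← ENNReal.inv_zpow', ← ENNReal.rpow_neg,
          neg_sub]
    _ = A * rieszBound β a b := by
        rw [rieszBound, ENNReal.tsum_mul_left, ENNReal.tsum_mul_left, ENNReal.tsum_geometric,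
          ENNReal.tsum_geometric_add_one, ← add_sub_cancel a β, two_rpow_add a,
          add_sub_cancel]
        ring

theorem setLIntegral_le_rpow_mul_measure_rpow {X : Type*} [MeasurableSpace X] {μ : Measure X}
    {p : ℝ} (hp : 1 ≤ p) {f : X → ℝ≥0∞} (hf : Measurable f) (B : Set X) :
    ∫⁻ y in B, f y ∂μ ≤ (∫⁻ y in B, f y ^ p ∂μ) ^ (1 / p) * μ B ^ (1 - 1 / p) := by
  simpa [eLpNorm'] using
    eLpNorm'_le_eLpNorm'_mul_rpow_measure_univ (μ := μ.restrict B) one_pos hp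
      hf.aestronglyMeasurable

theorem withDensity_ball_le {μ : Measure M} {V : ℝ≥0∞} {d p r : ℝ} (hp : 1 ≤ p)
    {f : M → ℝ≥0∞} (hf : Measurable f) {x : M}
    (hvol : μ (ball x r) ≤ V * ENNReal.ofReal r ^ d) :
    μ.withDensity f (ball x r) ≤ (∫⁻ y in ball x r, f y ^ p ∂μ) ^ (1 / p) *
      (V ^ (1 - 1 / p) * ENNReal.ofReal r ^ (d * (1 - 1 / p))) := by
  have hq : 0 ≤ 1 - 1 / p := sub_nonneg.2 ((div_le_one (one_pos.trans_le hp)).2 hp)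
  rw [withDensity_apply _ measurableSet_ball, ENNReal.rpow_mul,
    ← ENNReal.mul_rpow_of_nonneg _ _ hq]
  refine (setLIntegral_le_rpow_mul_measure_rpow hp hf _).trans ?_
  gcongr

theorem lintegral_edist_rpow_mul_le {μ : Measure M} {V : ℝ≥0∞} {α d p s : ℝ} (hp : 1 ≤ p)
    (hαd : α < d) {f : M → ℝ≥0∞} (hf : Measurable f) {x : M}
    (hvol : ∀ r : ℝ, 0 < r → μ (ball x r) ≤ V * ENNReal.ofReal r ^ d)
    (htotal : ∫⁻ y, f y ^ p ∂μ ≤ 1)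
    (hlocal : ∀ r : ℝ, 0 < r → r ≤ 1 →
      ∫⁻ y in ball x r, f y ^ p ∂μ ≤ ENNReal.ofReal r ^ s) :
    ∫⁻ y, edist x y ^ (α - d) * f y ∂μ ≤
      V ^ (1 - 1 / p) * rieszBound (d - α) (s / p + d * (1 - 1 / p)) (d * (1 - 1 / p)) := by
  have hp0 : 0 < p := one_pos.trans_le hp
  have hsmall (r : ℝ) (hr : 0 < r) (hr1 : r ≤ 1) : μ.withDensity f (ball x r) ≤
      V ^ (1 - 1 / p) * ENNReal.ofReal r ^ (s / p + d * (1 - 1 / p)) :=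
    calc μ.withDensity f (ball x r)
        ≤ (∫⁻ y in ball x r, f y ^ p ∂μ) ^ (1 / p) *
          (V ^ (1 - 1 / p) * ENNReal.ofReal r ^ (d * (1 - 1 / p))) :=
          withDensity_ball_le hp hf (hvol r hr)
      _ ≤ (ENNReal.ofReal r ^ s) ^ (1 / p) *
          (V ^ (1 - 1 / p) * ENNReal.ofReal r ^ (d * (1 - 1 / p))) := by
          gcongr
          exact hlocal r hr hr1
      _ = V ^ (1 - 1 / p) * ENNReal.ofReal r ^ (s / p + d * (1 - 1 / p)) := by
          rw [mul_left_comm, ← ENNReal.rpow_mul, mul_one_div,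
            ENNReal.rpow_add _ _ (ENNReal.ofReal_pos.2 hr).ne' ENNReal.ofReal_ne_top]
  have hlarge (r : ℝ) (hr : 1 ≤ r) : μ.withDensity f (ball x r) ≤
      V ^ (1 - 1 / p) * ENNReal.ofReal r ^ (d * (1 - 1 / p)) := by
    refine (withDensity_ball_le hp hf (hvol r (one_pos.trans_le hr))).trans ?_
    exact mul_le_of_le_one_left' (ENNReal.rpow_le_one
      ((setLIntegral_le_lintegral _ _).trans htotal) (one_div_nonneg.2 hp0.le))
  calc ∫⁻ y, edist x y ^ (α - d) * f y ∂μ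
      = ∫⁻ y, edist x y ^ (-(d - α)) ∂μ.withDensity f := by
        rw [lintegral_withDensity_eq_lintegral_mul μ hf
          (measurable_edist_right.pow_const (-(d - α)))]
        simp only [neg_sub, Pi.mul_apply, mul_comm]
    _ ≤ _ := lintegral_edist_rpow_neg_le (sub_pos.2 hαd) hsmall hlarge

theorem exists_lintegral_edist_rpow_mul_le {α d p s : ℝ} (hα : 0 < α) (hp : 1 ≤ p)
    (hαp : α * p < d) (hs : d - α * p < s) {V : ℝ≥0∞} (hV : V ≠ ∞) :
    ∃ K : ℝ≥0∞, K ≠ ∞ ∧ ∀ (μ : Measure M) (f : M → ℝ≥0∞) (x : M), Measurable f →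
      (∀ r : ℝ, 0 < r → μ (ball x r) ≤ V * ENNReal.ofReal r ^ d) →
      ∫⁻ y, f y ^ p ∂μ ≤ 1 →
      (∀ r : ℝ, 0 < r → r ≤ 1 → ∫⁻ y in ball x r, f y ^ p ∂μ ≤ ENNReal.ofReal r ^ s) →
      ∫⁻ y, edist x y ^ (α - d) * f y ∂μ ≤ K := by
  have hp0 : 0 < p := one_pos.trans_le hp
  have hq : 0 ≤ 1 - 1 / p := sub_nonneg.2 ((div_le_one hp0).2 hp)
  have hαd : α < d := (le_mul_of_one_le_right hα.le hp).trans_lt hαp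
  have hlocal : d - α < s / p + d * (1 - 1 / p) := by
    rw [← sub_pos, show s / p + d * (1 - 1 / p) - (d - α) = (s - (d - α * p)) / p by
      field_simp; ring]
    exact div_pos (sub_pos.2 hs) hp0
  have hglobal : d * (1 - 1 / p) < d - α := by
    rw [← sub_pos, show d - α - d * (1 - 1 / p) = (d - α * p) / p by field_simp; ring]
    exact div_pos (sub_pos.2 hαp) hp0
  exact ⟨_, ENNReal.mul_ne_top (ENNReal.rpow_ne_top_of_nonneg hq hV)
      (rieszBound_ne_top hlocal hglobal),
    fun _ _ _ hf hvol htotal hf_local => lintegral_edist_rpow_mul_le hp hαd hf hvol htotal hf_local⟩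

end RieszPotential

section HausdorffMeasure

variable {M : Type*} [MeasurableSpace M]

theorem exists_countable_cover_closedBall_tsum_rpow_le [PseudoMetricSpace M]
    [OpensMeasurableSpace M] {m : Measure M} [IsFiniteMeasure m] {s : ℝ} (hs : 0 < s) {S : Set M}
    (hS : ∀ x ∈ S, ∃ r : ℝ, 0 < r ∧ ENNReal.ofReal r ^ s < m (ball x r)) :
    ∃ (u : Set M) (r : M → ℝ), u.Countable ∧ (∀ x ∈ u, 0 < r x) ∧
      S ⊆ ⋃ x : u, closedBall (x : M) (5 * r x) ∧
      ∑' x : u, ENNReal.ofReal (r x) ^ s ≤ m univ := by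
  choose! r hr hrm using hS
  have hbound : ∀ x ∈ S, r x ≤ (m univ ^ s⁻¹).toReal := fun x hx => by
    rw [← ENNReal.ofReal_le_iff_le_toReal
      (ENNReal.rpow_ne_top_of_nonneg (inv_nonneg.2 hs.le) (measure_ne_top m univ)),
      ENNReal.le_rpow_inv_iff hs]
    exact (hrm x hx).le.trans (measure_mono (subset_univ _))
  obtain ⟨u, huS, hdisj, hcov⟩ :=
    Vitali.exists_disjoint_subfamily_covering_enlargement_closedBall S id r _ hbound 5
      (by norm_num)
  have hsum : ∑' x : u, ENNReal.ofReal (r x) ^ s ≤ m univ :=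
    calc ∑' x : u, ENNReal.ofReal (r x) ^ s
        ≤ ∑' x : u, m (closedBall (x : M) (r x)) := ENNReal.tsum_le_tsum fun x =>
          (hrm x (huS x.2)).le.trans (measure_mono ball_subset_closedBall)
      _ ≤ m univ := tsum_measure_le_measure_univ
          (fun _ => measurableSet_closedBall.nullMeasurableSet)
          fun x y hxy => (hdisj x.2 y.2 (Subtype.coe_injective.ne hxy)).aedisjoint
  have hu : u.Countable := by
    have hsupp := Summable.countable_support_ennreal (ne_top_of_le_ne_top (measure_ne_top m _) hsum)
    rw [Function.support_eq_univ fun x : u => ?_, countable_univ_iff] at hsupp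
    · exact hsupp
    · exact (ENNReal.rpow_pos (ENNReal.ofReal_pos.2 (hr x (huS x.2))) ENNReal.ofReal_ne_top).ne'
  refine ⟨u, r, hu, fun x hx => hr x (huS hx), fun x hx => ?_, hsum⟩
  obtain ⟨z, hz, hsub⟩ := hcov x hx
  exact mem_iUnion.2 ⟨⟨z, hz⟩, hsub (mem_closedBall_self (hr x hx).le)⟩

theorem hausdorffMeasure_eq_zero_of_forall_exists_cover [EMetricSpace M] [BorelSpace M] {s : ℝ}
    (hs : 0 < s) {S : Set M}
    (h : ∀ δ : ℝ≥0∞, 0 < δ → ∃ (u : Set M) (t : M → Set M), u.Countable ∧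
      S ⊆ ⋃ x : u, t x ∧ ∑' x : u, ediam (t x) ^ s ≤ δ) :
    μH[s] S = 0 := by
  choose u t hu hcov hsum using fun n : ℕ => h (n : ℝ≥0∞)⁻¹ (by simp)
  have (n : ℕ) : Countable (u n) := (hu n).to_subtype
  have hdiam (n : ℕ) (x : u n) : ediam (t n x) ≤ ((n : ℝ≥0∞)⁻¹) ^ s⁻¹ :=
    (ENNReal.le_rpow_inv_iff hs).2 ((ENNReal.le_tsum x).trans (hsum n))
  have htendsto : Tendsto (fun n : ℕ => ((n : ℝ≥0∞)⁻¹) ^ s⁻¹) atTop (𝓝 0) := by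
    simpa [hs] using ENNReal.tendsto_inv_nat_nhds_zero.ennrpow_const s⁻¹
  refine nonpos_iff_eq_zero.1 ?_
  calc μH[s] S ≤ liminf (fun n => ∑' x : u n, ediam (t n x) ^ s) atTop :=
        Measure.hausdorffMeasure_le_liminf_tsum s S _ htendsto (fun n (x : u n) => t n x)
          (.of_forall hdiam) (.of_forall hcov)
    _ ≤ liminf (fun n : ℕ => (n : ℝ≥0∞)⁻¹) atTop := liminf_le_liminf (.of_forall hsum)
    _ = 0 := ENNReal.tendsto_inv_nat_nhds_zero.liminf_eq

theorem hausdorffMeasure_eq_zero_of_forall_exists_measure [MetricSpace M] [BorelSpace M] {s : ℝ}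
    (hs : 0 < s) {S : Set M}
    (h : ∀ δ : ℝ≥0∞, 0 < δ → ∃ m : Measure M, m univ ≤ δ ∧
      ∀ x ∈ S, ∃ r : ℝ, 0 < r ∧ ENNReal.ofReal r ^ s < m (ball x r)) :
    μH[s] S = 0 := by
  refine hausdorffMeasure_eq_zero_of_forall_exists_cover hs fun δ hδ => ?_
  have hpow : (10 : ℝ≥0∞) ^ s ≠ ∞ := ENNReal.rpow_ne_top_of_nonneg hs.le (by norm_num)
  obtain ⟨η, hη, hηδ⟩ := ENNReal.exists_nnreal_pos_mul_lt hpow hδ.ne'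
  obtain ⟨m, hm, hmS⟩ := h η (by exact_mod_cast hη)
  have : IsFiniteMeasure m := ⟨hm.trans_lt ENNReal.coe_lt_top⟩
  obtain ⟨u, r, hu, hr, hcov, hsum⟩ := exists_countable_cover_closedBall_tsum_rpow_le hs hmS
  have hdiam (x : u) :
      ediam (closedBall (x : M) (5 * r x)) ≤ 10 * ENNReal.ofReal (r x) := by
    have hrx := hr x x.2
    rw [← closedEBall_ofReal (by positivity)]
    refine ediam_closedEBall_le.trans_eq ?_
    rw [ENNReal.ofReal_mul (by norm_num), ← mul_assoc]
    norm_num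
  refine ⟨u, fun x => closedBall x (5 * r x), hu, hcov, ?_⟩
  calc ∑' x : u, ediam (closedBall (x : M) (5 * r x)) ^ s
      ≤ ∑' x : u, (10 * ENNReal.ofReal (r x)) ^ s := by gcongr with x; exact hdiam x
    _ = 10 ^ s * ∑' x : u, ENNReal.ofReal (r x) ^ s := by
        simp only [ENNReal.mul_rpow_of_nonneg _ _ hs.le, ENNReal.tsum_mul_left]
    _ ≤ 10 ^ s * η := by gcongr; exact hsum.trans hm
    _ ≤ δ := by rw [mul_comm]; exact hηδ.le

end HausdorffMeasure

section Capacity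

theorem exists_lintegral_rpow_lt_of_rcapK_eq_zero {X : Type*} [MeasurableSpace X] {μ : Measure X}
    {p : ℝ} (hp : 0 ≤ p) {g : X → X → ℝ≥0∞} {E : Set X} (hcap : rcapK μ p g E = 0)
    {δ K : ℝ≥0∞} (hδ : δ ≠ 0) (hK : K ≠ ∞) :
    ∃ f : X → ℝ≥0∞, Measurable f ∧ ∫⁻ x, f x ^ p ∂μ < δ ∧
      ∀ x ∈ E, K ≤ ∫⁻ y, g x y * f y ∂μ := by
  have hlt : rcapK μ p g E < δ / K ^ p :=
    hcap ▸ ENNReal.div_pos hδ (ENNReal.rpow_ne_top_of_nonneg hp hK)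
  simp only [rcapK, iInf_lt_iff] at hlt
  obtain ⟨f, ⟨hf, hfE⟩, hfp⟩ := hlt
  refine ⟨fun x => K * f x, hf.const_mul K, ?_, fun x hx => ?_⟩
  · simp only [ENNReal.mul_rpow_of_nonneg _ _ hp]
    rw [lintegral_const_mul _ (hf.pow_const p), mul_comm]
    exact ENNReal.mul_lt_of_lt_div hfp
  · simp only [mul_left_comm _ K]
    rw [lintegral_const_mul' _ _ hK]
    exact le_mul_of_one_le_right' (hfE x hx)

theorem stmt13_general {M : Type*} [MetricSpace M] [MeasurableSpace M] [BorelSpace M]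
    {μ : Measure M} {g : M → M → ℝ≥0∞} {α d p s : ℝ} (hα : 0 < α) (hp : 1 ≤ p)
    (hαp : α * p < d) (hs : d - α * p < s) {C V : ℝ≥0∞} (hC : C ≠ ∞) (hV : V ≠ ∞) {S : Set M}
    (hg : ∀ x ∈ S, ∀ y, g x y ≤ C * edist x y ^ (α - d))
    (hvol : ∀ x ∈ S, ∀ r : ℝ, 0 < r → μ (ball x r) ≤ V * ENNReal.ofReal r ^ d)
    (hH : 0 < μH[s] S) :
    0 < rcapK μ p g S := by
  refine pos_iff_ne_zero.2 fun hcap => hH.ne' ?_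
  obtain ⟨K, hK, hpotential⟩ := exists_lintegral_edist_rpow_mul_le (M := M) hα hp hαp hs hV
  have hCK : C * K ≠ ∞ := ENNReal.mul_ne_top hC hK
  refine hausdorffMeasure_eq_zero_of_forall_exists_measure (by linarith) fun δ hδ => ?_
  obtain ⟨f, hf, hfp, hfS⟩ := exists_lintegral_rpow_lt_of_rcapK_eq_zero (by linarith) hcap
    (lt_min hδ one_pos).ne' (ENNReal.add_ne_top.2 ⟨hCK, ENNReal.one_ne_top⟩)
  refine ⟨μ.withDensity fun y => f y ^ p, ?_, fun x hx => ?_⟩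
  · simpa using (hfp.trans_le (min_le_left _ _)).le
  by_contra! hlocal
  simp only [withDensity_apply _ measurableSet_ball] at hlocal
  refine (ENNReal.lt_add_right hCK one_ne_zero).not_ge ((hfS x hx).trans ?_)
  calc ∫⁻ y, g x y * f y ∂μ
      ≤ ∫⁻ y, C * (edist x y ^ (α - d) * f y) ∂μ := by
        simp only [← mul_assoc]
        gcongr with y
        exact hg x hx y
    _ = C * ∫⁻ y, edist x y ^ (α - d) * f y ∂μ := lintegral_const_mul' _ _ hC
    _ ≤ C * K := by
        gcongr
        exact hpotential μ f x hf (hvol x hx) (hfp.trans_le (min_le_right _ _)).le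
          fun r hr _ => hlocal r hr

end Capacity

/-- on a complete separable metric space with `d > 4`, `ε > 0`,
`g_λ(x,y) ≤ c₆ ϱ(x,y)^{2-d}` and `μ(B(x,r)) ≤ c₇ r^d`, every closed set `S` with
`H^{d-4+ε}(S) > 0` has positive capacity: `cap_{2,2}(S) > 0` (equivalently,
`cap_{2,2}(S) = 0` forces `H^{d-4+ε}(S) = 0` for all `ε > 0`). -/
theorem stmt13 {M : Type*} [MetricSpace M] [CompleteSpace M]
    [TopologicalSpace.SeparableSpace M] [MeasurableSpace M] [BorelSpace M]
    (μ : Measure M) (g : M → M → ℝ≥0∞) (d ε c₆ c₇ : ℝ)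
    (hd : 4 < d) (hε : 0 < ε) (hc₆ : 0 < c₆) (hc₇ : 0 < c₇)
    (S : Set M) (hS : IsClosed S)
    (hg : ∀ x y : M, g x y ≤ ENNReal.ofReal c₆ * edist x y ^ (2 - d))
    (hvol : ∀ (x : M) (r : ℝ), 0 < r → μ (Metric.ball x r) ≤ ENNReal.ofReal (c₇ * r ^ d))
    (hH : 0 < μH[d - 4 + ε] S) :
    0 < rcapK μ 2 g S := by
  refine stmt13_general two_pos one_le_two (by linarith) (by linarith) ENNReal.ofReal_ne_top
    (ENNReal.ofReal_ne_top (r := c₇)) (fun x _ => hg x) (fun x _ r hr => ?_) hH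
  rw [ENNReal.ofReal_rpow_of_pos hr, ← ENNReal.ofReal_mul hc₇.le]
  exact hvol x r hr
end
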